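/- arXiv:1907.11476 — 2 statements merged into one kernel-verified Lean document; each statement's English description precedes it below -/
import Mathlib

section
/- Let 2 ≤ q < ∞ and let φ : ℕ → ℂ. Then φ belongs to R₊(T_q), i.e. the kernel (x,y) ↦ φ(d(x,y)) is positive definite on the (q+1)-homogeneous tree T_q, if and only if there exists a positive finite Borel measure μ on the interval [-1,1] such that φ(n) = ∫_{[-1,1]} P_n^{(q)}(s) dμ(s) for all n ∈ ℕ. -/
/-!
Averaging over neighbours acts on the radial functions `x ↦ ψ (d(x, y))` of the
`(q + 1)`-homogeneous tree, and its eigenfunction for the eigenvalue `s`, normalized at `0`, is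
`n ↦ P_n(s)`.

If `φ` is radial and positive definite, the kernel defines a semi-inner product on the finitely
supported functions on the tree. Averaging over neighbours is symmetric for it and has bounded
orbits, hence it is a contraction and extends to a self-adjoint operator `A` of norm at most one on
the Hilbert space completion. Since `φ n = ⟪δ_o, P_n(A) δ_o⟫`, the spectral measure of `A` at `δ_o`
represents `φ`.

Conversely it suffices that `P_n(s)` is positive definite for each `s ∈ [-1, 1]`. The tree is
exhausted by adding to a finite subtree `S` one adjacent vertex `c` at a time. If `c` is attached to
`x ∈ S`, all neighbours of `x` outside `S` have the same distances to `S` as `c`, so that by the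
eigenfunction equation the mean of their point masses is a combination of point masses in `S`:
it is the orthogonal projection of `δ_c` to `S`. The Gram matrix of `S ∪ {c}` is nonnegative because
the inner product of `δ_c` with this projection is at most `1`, which comes down to `P_2(s) ≤ 1`.
-/

open MeasureTheory Filter Finset
open scoped ComplexOrder

/-- The polynomials `P_n^{(q)}`. -/
noncomputable def treeP (q : ℕ) : ℕ → ℝ → ℝ
  | 0, _ => 1
  | 1, x => x
  | (n+2), x => (1 + 1/(q:ℝ)) * x * treeP q (n+1) x - (1/(q:ℝ)) * treeP q n x

/-- The polynomials `Q_n^{(q)}`. -/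
noncomputable def treeQ (q : ℕ) : ℕ → ℝ → ℝ
  | 0, _ => 1
  | 1, x => (1 + 1/(q:ℝ)) * x
  | (n+2), x => (1 + 1/(q:ℝ)) * x * treeQ q (n+1) x - (1/(q:ℝ)) * treeQ q n x

/-- A kernel `ψ` on a set `X` is positive definite. -/
def IsPDKernel {X : Type*} (ψ : X → X → ℂ) : Prop :=
  ∀ (n : ℕ) (x : Fin n → X) (z : Fin n → ℂ),
    0 ≤ ∑ i, ∑ j, ψ (x i) (x j) * (starRingEnd ℂ) (z i) * z j

/-- `G` is a `(q+1)`-homogeneous tree: connected, acyclic, every vertex has exactly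
`q+1` neighbours. -/
def IsHomTree {V : Type} (G : SimpleGraph V) (q : ℕ) : Prop :=
  G.Connected ∧ G.IsAcyclic ∧ ∀ v : V, (G.neighborSet v).ncard = q + 1

/-- `G` is a homogeneous tree of countably infinite degree. -/
def IsInfTree {V : Type} (G : SimpleGraph V) : Prop :=
  G.Connected ∧ G.IsAcyclic ∧ ∀ v : V, (G.neighborSet v).Countable ∧ (G.neighborSet v).Infinite

open Polynomial UniformSpace
open scoped InnerProductSpace CompactlySupported

section PositiveFunctionals

lemma exists_finiteMeasure_of_positive {X : Type*} [TopologicalSpace X] [CompactSpace X]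
    [T2Space X] [MeasurableSpace X] [BorelSpace X] (Λ : C(X, ℝ) →ₗ[ℝ] ℝ)
    (hΛ : ∀ f, 0 ≤ f → 0 ≤ Λ f) :
    ∃ μ : Measure X, IsFiniteMeasure μ ∧ ∀ f, Λ f = ∫ x, f x ∂μ := by
  let Λ₀ : C_c(X, ℝ) →ₗ[ℝ] ℝ :=
    { toFun := fun f ↦ Λ f.toContinuousMap
      map_add' := fun f g ↦ Λ.map_add f.toContinuousMap g.toContinuousMap
      map_smul' := fun c f ↦ Λ.map_smul c f.toContinuousMap }
  let Λc : C_c(X, ℝ) →ₚ[ℝ] ℝ := PositiveLinearMap.mk₀ Λ₀ fun f hf ↦ hΛ f.toContinuousMap hf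
  exact ⟨RealRMK.rieszMeasure Λc, inferInstance, fun f ↦
    (RealRMK.integral_rieszMeasure Λc
      (CompactlySupportedContinuousMap.continuousMapEquiv f)).symm⟩

end PositiveFunctionals

section SpectralMeasure

variable {H : Type*} [NormedAddCommGroup H] [InnerProductSpace ℂ H] [CompleteSpace H]

lemma exists_finiteMeasure_inner_aeval_of_isSelfAdjoint {T : H →L[ℂ] H} (hT : IsSelfAdjoint T)
    (hnorm : ‖T‖ ≤ 1) (v : H) :
    ∃ μ : Measure (Set.Icc (-1 : ℝ) 1), IsFiniteMeasure μ ∧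
      ∀ p : ℝ[X], ⟪v, aeval T p v⟫_ℂ = ∫ s, ((p.eval (s : ℝ) : ℝ) : ℂ) ∂μ := by
  have hspec : spectrum ℝ T ⊆ Set.Icc (-1) 1 := fun s hs ↦ abs_le.1 <|
    (spectrum.norm_le_norm_mul_of_mem hs).trans <|
      mul_le_one₀ hnorm (norm_nonneg _) ContinuousLinearMap.norm_id_le
  let restrict : C(Set.Icc (-1 : ℝ) 1, ℝ) →⋆ₐ[ℝ] C(spectrum ℝ T, ℝ) :=
    ContinuousMap.compStarAlgHom' ℝ ℝ ⟨Set.inclusion hspec, by fun_prop⟩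
  let Φ := (cfcHom hT).comp restrict
  let Λ : C(Set.Icc (-1 : ℝ) 1, ℝ) →ₗ[ℝ] ℝ :=
    { toFun := fun f ↦ (⟪v, Φ f v⟫_ℂ).re
      map_add' := fun f g ↦ by simp
      map_smul' := fun c f ↦ by simp }
  have hpos (f) (hf : 0 ≤ f) : 0 ≤ ⟪v, Φ f v⟫_ℂ := by
    have hΦ : 0 ≤ Φ f := (cfcHom_nonneg_iff hT).2 fun s ↦ hf (Set.inclusion hspec s)
    exact ((ContinuousLinearMap.nonneg_iff_isPositive _).1 hΦ).inner_nonneg_right v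
  obtain ⟨μ, hμ, hΛ⟩ := exists_finiteMeasure_of_positive Λ
    fun f hf ↦ (Complex.nonneg_iff.1 (hpos f hf)).1
  refine ⟨μ, hμ, fun p ↦ ?_⟩
  have hreal (f) : ⟪v, Φ f v⟫_ℂ = Λ f :=
    (((IsSelfAdjoint.all f).map Φ).isSymmetric.coe_re_inner_self_apply v).symm
  have hpoly : (Φ : C(Set.Icc (-1 : ℝ) 1, ℝ) →ₐ[ℝ] H →L[ℂ] H).comp
      (toContinuousMapOnAlgHom _) = aeval T := by
    refine Polynomial.algHom_ext (.trans ?_ (aeval_X T).symm)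
    exact (congrArg (cfcHom hT) (ContinuousMap.ext fun s ↦ by simp [restrict])).trans
      (cfcHom_id hT)
  rw [← hpoly, integral_complex_ofReal]
  exact (hreal _).trans (congrArg _ (hΛ _))

end SpectralMeasure

section BoundedOrbits

/-- Were `a 0 < a 1`, then `a` would grow at least like a geometric sequence of ratio
`a 1 / a 0`. -/
lemma le_of_sq_le_mul_of_bddAbove {a : ℕ → ℝ} (h0 : ∀ n, 0 ≤ a n)
    (hlog : ∀ n, a (n + 1) ^ 2 ≤ a n * a (n + 2)) (hbdd : BddAbove (Set.range a)) :
    a 1 ≤ a 0 := by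
  by_contra! hlt
  have ha0 : 0 < a 0 := (h0 0).lt_of_ne fun h ↦ by
    have := hlog 0
    rw [← h, zero_mul] at this
    nlinarith
  have hr : 1 < a 1 / a 0 := (one_lt_div ha0).2 hlt
  set r := a 1 / a 0
  have hgrow (n : ℕ) : 0 < a n ∧ r * a n ≤ a (n + 1) := by
    induction n with
    | zero => exact ⟨ha0, (div_mul_cancel₀ _ ha0.ne').le⟩
    | succ n ih =>
      obtain ⟨hpos, hle⟩ := ih
      have hpos' : 0 < a (n + 1) := by nlinarith
      refine ⟨hpos', le_of_mul_le_mul_left ?_ hpos⟩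
      nlinarith [hlog n]
  have hgeom (n : ℕ) : r ^ n * a 0 ≤ a n := by
    induction n with
    | zero => simp
    | succ n ih => rw [pow_succ']; nlinarith [hgrow n]
  obtain ⟨M, hM⟩ := hbdd
  obtain ⟨n, hn⟩ := pow_unbounded_of_one_lt (M / a 0) hr
  exact (hM ⟨n, rfl⟩).not_gt (((div_lt_iff₀ ha0).1 hn).trans_le (hgeom n))

variable {E : Type*} [SeminormedAddCommGroup E] [InnerProductSpace ℂ E]

lemma norm_map_le_of_isSymmetric_of_bddAbove {A : Module.End ℂ E} (hA : A.IsSymmetric) (x : E)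
    (hbdd : BddAbove (Set.range fun n ↦ ‖(A ^ n) x‖)) : ‖A x‖ ≤ ‖x‖ := by
  have hlog (y : E) : ‖A y‖ ^ 2 ≤ ‖y‖ * ‖A (A y)‖ := by
    rw [← inner_self_eq_norm_sq (𝕜 := ℂ), hA]
    exact re_inner_le_norm _ _
  simpa using le_of_sq_le_mul_of_bddAbove (fun n ↦ norm_nonneg ((A ^ n) x))
    (fun n ↦ by simpa [pow_succ'] using hlog ((A ^ n) x)) hbdd

/-- The self-adjoint contraction extending `A` to the completion has a spectral measure at `v`. -/
lemma exists_finiteMeasure_inner_aeval_of_isSymmetric {A : Module.End ℂ E} (hA : A.IsSymmetric)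
    (hbdd : ∀ x, BddAbove (Set.range fun n ↦ ‖(A ^ n) x‖)) (v : E) :
    ∃ μ : Measure (Set.Icc (-1 : ℝ) 1), IsFiniteMeasure μ ∧
      ∀ p : ℝ[X], ⟪v, aeval A p v⟫_ℂ = ∫ s, ((p.eval (s : ℝ) : ℝ) : ℂ) ∂μ := by
  have hcontr (x : E) : ‖A x‖ ≤ 1 * ‖x‖ := by
    simpa using norm_map_le_of_isSymmetric_of_bddAbove hA x (hbdd x)
  let T := (A.mkContinuous 1 hcontr).completion
  have hTcoe (x : E) : T x = (A x : Completion E) := by simp [T]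
  have hT : IsSelfAdjoint T := by
    rw [ContinuousLinearMap.isSelfAdjoint_iff_isSymmetric]
    intro x y
    induction x, y using Completion.induction_on₂ with
    | hp => apply isClosed_eq <;> fun_prop
    | ih x y => simp [hTcoe, hA x y]
  have hnorm : ‖T‖ ≤ 1 := by
    refine T.opNorm_le_bound zero_le_one fun x ↦ ?_
    induction x using Completion.induction_on with
    | hp => apply isClosed_le <;> fun_prop
    | ih x => simpa [hTcoe] using hcontr x
  have hpoly (p : ℝ[X]) (x : E) : aeval T p x = (aeval A p x : Completion E) := by
    induction p using Polynomial.induction_on generalizing x with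
    | C a => simp
    | add p q hp hq => simp [hp, hq, Completion.coe_add]
    | monomial n a ih =>
      rw [pow_succ, ← mul_assoc, map_mul _ _ X, map_mul _ _ X, aeval_X, aeval_X,
        mul_apply_eq_comp, Module.End.mul_apply, hTcoe, ih]
  obtain ⟨μ, hμ, hint⟩ := exists_finiteMeasure_inner_aeval_of_isSelfAdjoint hT hnorm v
  exact ⟨μ, hμ, fun p ↦ by rw [← hint, hpoly, Completion.inner_coe]⟩

end BoundedOrbits

section SesquilinearForm

variable {M : Type*} [AddCommGroup M] [Module ℂ M] {B : M →ₗ⋆[ℂ] M →ₗ[ℂ] ℂ}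

lemma isSymm_of_isNonneg (hB : B.IsNonneg) : B.IsSymm where
  eq x y := by
    have him (z : M) : (B z z).im = 0 := (Complex.nonneg_iff.1 (hB.nonneg z)).2.symm
    have h1 := him (x + y)
    have h2 := him (x + Complex.I • y)
    simp only [map_add, LinearMap.add_apply, Complex.add_im, him x, zero_add, him y, add_zero,
      LinearMap.map_smulₛₗ, Complex.conj_I, neg_smul, map_smul, smul_eq_mul, LinearMap.neg_apply,
      LinearMap.smul_apply, Complex.mul_im, Complex.I_re, zero_mul, Complex.I_im, one_mul,
      Complex.neg_im, mul_zero, Complex.add_re, Complex.neg_re,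
      Complex.mul_re, sub_self] at h1 h2
    refine Complex.ext ?_ ?_
    · rw [Complex.conj_re]
      linarith
    · rw [Complex.conj_im]
      linarith

/-- The semi-inner product defined by a nonnegative form. -/
abbrev formCore (hB : B.IsNonneg) : PreInnerProductSpace.Core ℂ M where
  inner x y := B x y
  conj_inner_symm x y := (isSymm_of_isNonneg hB).eq y x
  re_inner_nonneg x := (Complex.nonneg_iff.1 (hB.nonneg x)).1
  add_left x y z := by simp
  smul_left x y a := by simp

end SesquilinearForm

section KernelForm

variable {X : Type*} {ψ : X → X → ℂ}

/-- The sesquilinear form `(f, g) ↦ ∑ x, ∑ y, ψ x y * conj (f x) * g y` on finitely supported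
functions; positive definiteness of `ψ` is its nonnegativity. -/
noncomputable def kernelForm (ψ : X → X → ℂ) : (X →₀ ℂ) →ₗ⋆[ℂ] (X →₀ ℂ) →ₗ[ℂ] ℂ :=
  (Finsupp.linearCombination ℂ fun x ↦ Finsupp.linearCombination ℂ (ψ x)).comp
    (Finsupp.mapRange.linearMap (starLinearEquiv ℂ).toLinearMap)

@[simp]
lemma kernelForm_single_single (x y : X) (a b : ℂ) :
    kernelForm ψ (.single x a) (.single y b) = ψ x y * (starRingEnd ℂ) a * b := by
  simp only [kernelForm, LinearMap.coe_comp, Function.comp_apply, LinearEquiv.coe_coe,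
    Finsupp.mapRange.linearMap_apply, Finsupp.mapRange_single, starLinearEquiv_apply,
    RCLike.star_def, Finsupp.linearCombination_single, LinearMap.smul_apply, smul_eq_mul]
  ring

lemma kernelForm_sum_single {ι : Type*} [Fintype ι] (x : ι → X) (z : ι → ℂ) :
    kernelForm ψ (∑ i, .single (x i) (z i)) (∑ i, .single (x i) (z i)) =
      ∑ i, ∑ j, ψ (x i) (x j) * (starRingEnd ℂ) (z i) * z j := by
  simp only [map_sum, LinearMap.sum_apply, kernelForm_single_single]
  exact Finset.sum_comm

lemma isPDKernel_iff_isNonneg : IsPDKernel ψ ↔ (kernelForm ψ).IsNonneg := by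
  refine ⟨fun h ↦ ⟨fun f ↦ ?_⟩, fun h n x z ↦ kernelForm_sum_single (ψ := ψ) x z ▸ h.nonneg _⟩
  have hf : f = ∑ i, .single (f.support.equivFin.symm i).1 (f (f.support.equivFin.symm i).1) := by
    rw [f.support.equivFin.symm.sum_comp fun x ↦ Finsupp.single x.1 (f x.1),
      Finset.sum_coe_sort f.support fun x ↦ Finsupp.single x (f x)]
    exact f.sum_single.symm
  rw [hf, kernelForm_sum_single]
  exact h _ _ _

lemma isSymm_kernelForm (hψ : ∀ x y, (starRingEnd ℂ) (ψ x y) = ψ y x) :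
    (kernelForm ψ).IsSymm where
  eq f g := by
    induction f using Finsupp.induction_linear with
    | zero => simp
    | add f₁ f₂ h₁ h₂ => simp [h₁, h₂]
    | single x a =>
      induction g using Finsupp.induction_linear with
      | zero => simp
      | add g₁ g₂ h₁ h₂ => simp [h₁, h₂]
      | single y b =>
        simp only [kernelForm_single_single, map_mul, Complex.conj_conj, hψ]
        ring

end KernelForm

section TreeDistance

variable {V : Type*} {G : SimpleGraph V}

lemma length_eq_dist_of_isPath (hG : G.IsTree) {x y : V} {p : G.Walk x y} (hp : p.IsPath) :
    p.length = G.dist x y := by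
  obtain ⟨p', hp', hlen⟩ := (hG.connected x y).exists_path_of_dist
  rw [← hlen, congrArg (fun r : G.Path x y ↦ r.1.length)
    ((hG.isAcyclic.subsingleton_path x y).elim ⟨p, hp⟩ ⟨p', hp'⟩)]

lemma existsUnique_adj_dist_add_one (hG : G.IsTree) {x y : V} (hxy : x ≠ y) :
    ∃! u, G.Adj x u ∧ G.dist u y + 1 = G.dist x y := by
  obtain ⟨p, hp, hlen⟩ := (hG.connected x y).exists_path_of_dist
  cases p with
  | nil => exact absurd rfl hxy
  | @cons _ u _ hu p =>
    refine ⟨u, ⟨hu, ?_⟩, fun v ⟨hv, hdist⟩ ↦ ?_⟩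
    · rw [← length_eq_dist_of_isPath hG hp.of_cons, ← hlen, SimpleGraph.Walk.length_cons]
    · obtain ⟨r, hr⟩ := hG.connected.exists_walk_length_eq_dist v y
      have hpath : (r.cons hv).IsPath :=
        SimpleGraph.Walk.isPath_of_length_eq_dist _ (by simp [hr, hdist])
      simpa using congrArg (fun w : G.Path x y ↦ w.1.snd)
        ((hG.isAcyclic.subsingleton_path x y).elim ⟨_, hpath⟩ ⟨_, hp⟩)

lemma dist_of_adj_of_notMem (hG : G.IsTree) {S : Set V} (hS : (G.induce S).Preconnected)
    {c x y : V} (hx : x ∈ S) (hy : y ∈ S) (hc : c ∉ S) (hadj : G.Adj c x) :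
    G.dist c y = G.dist x y + 1 := by
  obtain ⟨p, hp, -⟩ := (hS ⟨x, hx⟩ ⟨y, hy⟩).exists_path_of_dist
  let p' : G.Walk x y := p.map (SimpleGraph.Embedding.induce S).toHom
  have hp' : p'.IsPath := hp.map Subtype.val_injective
  have hc' : c ∉ p'.support := fun h ↦ by
    obtain ⟨z, -, rfl⟩ := List.mem_map.1 (p.support_map _ ▸ h)
    exact hc z.2
  rw [← length_eq_dist_of_isPath hG (hp'.cons (h := hadj) hc'), ← length_eq_dist_of_isPath hG hp',
    SimpleGraph.Walk.length_cons]

lemma exists_finset_superset_of_insert [DecidableEq V] (hG : G.Connected) {P : Finset V → Prop}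
    (hsingleton : ∀ v, P {v})
    (hinsert : ∀ ⦃S x c⦄, P S → x ∈ S → c ∉ S → G.Adj c x → P (insert c S)) (T : Finset V) :
    ∃ S, T ⊆ S ∧ P S := by
  obtain ⟨o⟩ := hG.nonempty
  have hwalk {x y : V} (p : G.Walk x y) :
      ∀ S, x ∈ S → P S → ∃ S', S ⊆ S' ∧ y ∈ S' ∧ P S' := by
    induction p with
    | nil => exact fun S hx hS ↦ ⟨S, Subset.rfl, hx, hS⟩
    | @cons x u _ hadj _ ih =>
      intro S hx hS
      by_cases hu : u ∈ S
      · exact ih S hu hS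
      · obtain ⟨S', hsub, hy, hS'⟩ := ih _ (mem_insert_self u S) (hinsert hS hx hu hadj.symm)
        exact ⟨S', (subset_insert u S).trans hsub, hy, hS'⟩
  suffices ∃ S, o ∈ S ∧ T ⊆ S ∧ P S from this.imp fun S hS ↦ hS.2
  induction T using Finset.induction_on with
  | empty => exact ⟨{o}, mem_singleton_self o, empty_subset _, hsingleton o⟩
  | insert v T _ ih =>
    obtain ⟨S, ho, hT, hS⟩ := ih
    obtain ⟨S', hsub, hv, hS'⟩ := hwalk (hG o v).some S ho hS
    exact ⟨S', hsub ho, insert_subset hv (hT.trans hsub), hS'⟩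

end TreeDistance

section NeighbourSums

/-- Averaging over the neighbours of a vertex of a `(q + 1)`-homogeneous tree, as an operator on
radial functions: `ψ` stands for the function `x ↦ ψ (d(x, y))`, where `y` is a fixed vertex. -/
noncomputable def radialAverage (q : ℕ) : Module.End ℂ (ℕ → ℂ) where
  toFun ψ
    | 0 => ψ 1
    | n + 1 => (ψ n + q * ψ (n + 2)) / (q + 1)
  map_add' ψ χ := by
    ext (_ | n)
    · rfl
    · simp only [Pi.add_apply]
      ring
  map_smul' a ψ := by
    ext (_ | n)
    · rfl
    · simp only [Pi.smul_apply, smul_eq_mul, RingHom.id_apply]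
      ring

lemma radialAverage_zero (q : ℕ) (ψ : ℕ → ℂ) : radialAverage q ψ 0 = ψ 1 := rfl

lemma radialAverage_succ (q : ℕ) (ψ : ℕ → ℂ) (n : ℕ) :
    radialAverage q ψ (n + 1) = (ψ n + q * ψ (n + 2)) / (q + 1) := rfl

namespace IsHomTree

variable {V : Type} {G : SimpleGraph V} {q : ℕ}

lemma isTree (hG : IsHomTree G q) : G.IsTree := ⟨hG.1, hG.2.1⟩

/-- The neighbours of a vertex of a homogeneous tree, as a finite set. -/
noncomputable def neighbors (hG : IsHomTree G q) (x : V) : Finset V :=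
  (Set.finite_of_ncard_pos (s := G.neighborSet x) (by simp [hG.2.2 x])).toFinset

lemma mem_neighbors (hG : IsHomTree G q) {x u : V} : u ∈ hG.neighbors x ↔ G.Adj x u := by
  simp [neighbors]

lemma card_neighbors (hG : IsHomTree G q) (x : V) : #(hG.neighbors x) = q + 1 := by
  rw [← hG.2.2 x, neighbors, Set.ncard_eq_toFinset_card _ _]

lemma sum_neighbors_dist (hG : IsHomTree G q) (ψ : ℕ → ℂ) (x y : V) :
    ∑ u ∈ hG.neighbors x, ψ (G.dist u y) = (q + 1) * radialAverage q ψ (G.dist x y) := by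
  classical
  rcases hn : G.dist x y with _ | n
  · obtain rfl := hG.1.dist_eq_zero_iff.1 hn
    rw [sum_congr rfl fun u hu ↦ by
      rw [SimpleGraph.dist_eq_one_iff_adj.2 (hG.mem_neighbors.1 hu).symm]]
    simp [hG.card_neighbors, radialAverage_zero]
  · have hxy : x ≠ y := fun h ↦ by simp [h] at hn
    obtain ⟨c, ⟨hc, hcdist⟩, hunique⟩ := existsUnique_adj_dist_add_one hG.isTree hxy
    have hcmem := hG.mem_neighbors.2 hc
    have hfar (u) (hu : u ∈ (hG.neighbors x).erase c) : ψ (G.dist u y) = ψ (n + 2) := by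
      obtain ⟨hne, hu⟩ := mem_erase.1 hu
      have hadj := hG.mem_neighbors.1 hu
      have hcases := hG.isTree.dist_eq_dist_add_one_of_adj y hadj
      rw [G.dist_comm (u := y), G.dist_comm (u := y)] at hcases
      have hnotcloser : G.dist u y + 1 ≠ G.dist x y := fun h ↦ hne (hunique u ⟨hadj, h⟩)
      rw [show G.dist u y = n + 2 by omega]
    rw [← add_sum_erase _ _ hcmem, sum_congr rfl hfar, sum_const, card_erase_of_mem hcmem,
      hG.card_neighbors, show G.dist c y = n by omega, radialAverage_succ,
      mul_div_cancel₀ _ (Nat.cast_add_one_ne_zero q)]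
    simp

end IsHomTree

end NeighbourSums

/-- The sesquilinear form on finitely supported functions on the vertices defined by the radial
kernel `(x, y) ↦ ψ (d(x, y))`. -/
noncomputable abbrev radialForm {V : Type*} (G : SimpleGraph V) (ψ : ℕ → ℂ) :
    (V →₀ ℂ) →ₗ⋆[ℂ] (V →₀ ℂ) →ₗ[ℂ] ℂ :=
  kernelForm fun x y ↦ ψ (G.dist x y)

section SphericalFunctions

lemma treeP_two_le_one {q : ℕ} (hq : q ≠ 0) {s : ℝ} (hs : s ∈ Set.Icc (-1 : ℝ) 1) :
    treeP q 2 s ≤ 1 := by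
  have hsq : s ^ 2 ≤ 1 := (sq_le_one_iff_abs_le_one s).2 (abs_le.2 hs)
  have hgap : 1 - treeP q 2 s = (q + 1) * (1 - s ^ 2) / q := by
    simp only [treeP]
    field_simp
    ring
  have : 0 ≤ (q + 1) * (1 - s ^ 2) / q := by
    have := sub_nonneg.2 hsq
    positivity
  linarith

/-- The spherical function of the `(q + 1)`-homogeneous tree with parameter `s`, that is, the radial
eigenfunction of averaging for the eigenvalue `s`, as a function of the distance `n`. -/
noncomputable def sphericalFunction (q : ℕ) (s : ℝ) (n : ℕ) : ℂ := treeP q n s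

lemma radialAverage_sphericalFunction {q : ℕ} (hq : q ≠ 0) (s : ℝ) (n : ℕ) :
    radialAverage q (sphericalFunction q s) n = s * sphericalFunction q s n := by
  have hq' : (q : ℂ) ≠ 0 := Nat.cast_ne_zero.2 hq
  have hq1 : (q : ℂ) + 1 ≠ 0 := Nat.cast_add_one_ne_zero q
  rcases n with _ | n
  · simp [radialAverage_zero, sphericalFunction, treeP]
  · simp only [radialAverage_succ, sphericalFunction, treeP]
    push_cast
    field_simp
    ring

/-- The vector `v` is the orthogonal projection of `c` to `W`. -/
lemma nonneg_add_smul_of_projection {M : Type*} [AddCommGroup M] [Module ℂ M]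
    {B : M →ₗ⋆[ℂ] M →ₗ[ℂ] ℂ} (hB : B.IsSymm) {W : Submodule ℂ M} (hW : ∀ w ∈ W, 0 ≤ B w w)
    {v c : M} (hv : v ∈ W) (hproj : ∀ w ∈ W, B v w = B c w) (hle : B v c ≤ B c c)
    {w : M} (hw : w ∈ W) (a : ℂ) : 0 ≤ B (w + a • c) (w + a • c) := by
  have hproj' (w) (hw : w ∈ W) : B w c = B w v := by
    rw [← hB.eq, ← hB.eq v, hproj w hw]
  have hexpand : B (w + a • c) (w + a • c) =
      B (w + a • v) (w + a • v) + star a * a * (B c c - B v c) := by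
    simp only [map_add, LinearMap.add_apply, map_smul, LinearMap.map_smulₛₗ, LinearMap.smul_apply,
      smul_eq_mul, starRingEnd_apply, hproj' w hw, ← hproj w hw, hproj' v hv]
    ring
  rw [hexpand]
  exact add_nonneg (hW _ (W.add_mem hw (W.smul_mem a hv)))
    (mul_nonneg (star_mul_self_nonneg a) (sub_nonneg.2 hle))

namespace IsHomTree

variable {V : Type} {G : SimpleGraph V} {q : ℕ}

lemma sphericalFunction_dist_le_one (hG : IsHomTree G q) (hq : q ≠ 0) {s : ℝ}
    (hs : s ∈ Set.Icc (-1 : ℝ) 1) {u c x : V} (hu : G.Adj u x) (hc : G.Adj c x) :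
    sphericalFunction q s (G.dist u c) ≤ 1 := by
  have hdist := hG.isTree.dist_eq_dist_add_one_of_adj u hc
  rw [SimpleGraph.dist_eq_one_iff_adj.2 hu] at hdist
  obtain h | h : G.dist u c = 0 ∨ G.dist u c = 2 := by omega
  · simp [h, sphericalFunction, treeP]
  · rw [h, sphericalFunction]
    exact_mod_cast treeP_two_le_one hq hs

/-- The vector `v` is the mean of the point masses at the neighbours of `x` outside `S`, rewritten
through the eigenfunction equation at `x` in terms of point masses in `S`. -/
lemma exists_projection (hG : IsHomTree G q) (hq : q ≠ 0) {s : ℝ} (hs : s ∈ Set.Icc (-1 : ℝ) 1)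
    {S : Set V} (hS : (G.induce S).Preconnected) {x c : V} (hx : x ∈ S) (hc : c ∉ S)
    (hadj : G.Adj c x) :
    ∃ v ∈ Finsupp.supported ℂ ℂ S,
      (∀ y ∈ S, radialForm G (sphericalFunction q s) v (.single y 1) =
        radialForm G (sphericalFunction q s) (.single c 1) (.single y 1)) ∧
      radialForm G (sphericalFunction q s) v (.single c 1) ≤ 1 := by
  classical
  let old := {u ∈ hG.neighbors x | u ∈ S}
  let new := {u ∈ hG.neighbors x | u ∉ S}
  have hcnew : c ∈ new := mem_filter.2 ⟨hG.mem_neighbors.2 hadj.symm, hc⟩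
  have hcard : (#new : ℂ) ≠ 0 := Nat.cast_ne_zero.2 (card_ne_zero_of_mem hcnew)
  let v : V →₀ ℂ := (#new : ℂ)⁻¹ • (((q + 1) * s : ℂ) • .single x 1 - ∑ u ∈ old, .single u 1)
  have hv (y) : radialForm G (sphericalFunction q s) v (.single y 1) =
      (#new : ℂ)⁻¹ * ∑ u ∈ new, sphericalFunction q s (G.dist u y) := by
    have hsum : ∑ u ∈ old, sphericalFunction q s (G.dist u y) +
        ∑ u ∈ new, sphericalFunction q s (G.dist u y) =
          (q + 1) * (s * sphericalFunction q s (G.dist x y)) := by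
      rw [sum_filter_add_sum_filter_not, hG.sum_neighbors_dist, radialAverage_sphericalFunction hq]
    simp only [v, LinearMap.map_smulₛₗ, map_sub, map_sum, LinearMap.smul_apply,
      LinearMap.sub_apply, LinearMap.sum_apply, kernelForm_single_single, smul_eq_mul, map_inv₀,
      map_mul, map_add, map_natCast, map_one, mul_one, Complex.conj_ofReal]
    linear_combination -(#new : ℂ)⁻¹ * hsum
  refine ⟨v, ?_, fun y hy ↦ ?_, ?_⟩
  · exact Submodule.smul_mem _ _ (Submodule.sub_mem _
      (Submodule.smul_mem _ _ (Finsupp.single_mem_supported ℂ _ hx))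
      (Submodule.sum_mem _ fun u hu ↦ Finsupp.single_mem_supported ℂ _ (mem_filter.1 hu).2))
  · have hdist (u) (hu : u ∈ new) :
        sphericalFunction q s (G.dist u y) = sphericalFunction q s (G.dist c y) := by
      obtain ⟨hu, huS⟩ := mem_filter.1 hu
      rw [dist_of_adj_of_notMem hG.isTree hS hx hy huS (hG.mem_neighbors.1 hu).symm,
        dist_of_adj_of_notMem hG.isTree hS hx hy hc hadj]
    rw [hv, sum_congr rfl hdist]
    simp [hcard]
  · have hle (u) (hu : u ∈ new) : sphericalFunction q s (G.dist u c) ≤ 1 :=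
      hG.sphericalFunction_dist_le_one hq hs (hG.mem_neighbors.1 (mem_filter.1 hu).1).symm hadj
    rw [hv, inv_mul_le_one₀ (by positivity)]
    simpa using sum_le_card_nsmul _ _ _ hle

end IsHomTree

end SphericalFunctions

section AveragingOperator

/-- The polynomials `P_n^{(q)}` as formal polynomials, to be evaluated at operators. -/
noncomputable def treePolynomial (q : ℕ) : ℕ → ℝ[X]
  | 0 => 1
  | 1 => X
  | n + 2 =>
    C (1 + 1 / (q : ℝ)) * X * treePolynomial q (n + 1) - C (1 / (q : ℝ)) * treePolynomial q n

lemma eval_treePolynomial (q : ℕ) (s : ℝ) : ∀ n, (treePolynomial q n).eval s = treeP q n s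
  | 0 => by simp [treePolynomial, treeP]
  | 1 => by simp [treePolynomial, treeP]
  | n + 2 => by
    simp [treePolynomial, treeP, eval_treePolynomial q s n, eval_treePolynomial q s (n + 1)]

namespace IsHomTree

variable {V : Type} {G : SimpleGraph V} {q : ℕ}

/-- Averaging over neighbours, as an operator on finitely supported functions: the transition
operator of the simple random walk. -/
noncomputable def average (hG : IsHomTree G q) : Module.End ℂ (V →₀ ℂ) :=
  Finsupp.linearCombination ℂ fun x ↦ (q + 1 : ℂ)⁻¹ • ∑ u ∈ hG.neighbors x, .single u 1

lemma average_single (hG : IsHomTree G q) (x : V) :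
    hG.average (.single x 1) = (q + 1 : ℂ)⁻¹ • ∑ u ∈ hG.neighbors x, .single u 1 := by
  simp [average]

lemma radialForm_average_left (hG : IsHomTree G q) (ψ : ℕ → ℂ) (f g : V →₀ ℂ) :
    radialForm G ψ (hG.average f) g = radialForm G (radialAverage q ψ) f g := by
  suffices (radialForm G ψ).comp hG.average = radialForm G (radialAverage q ψ) from
    LinearMap.congr_fun₂ this f g
  ext x y
  simp [average_single, hG.sum_neighbors_dist,
    inv_mul_cancel_left₀ (Nat.cast_add_one_ne_zero (R := ℂ) q)]

lemma radialForm_average_right (hG : IsHomTree G q) (ψ : ℕ → ℂ) (f g : V →₀ ℂ) :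
    radialForm G ψ f (hG.average g) = radialForm G (radialAverage q ψ) f g := by
  suffices (radialForm G ψ).compl₂ hG.average = radialForm G (radialAverage q ψ) from
    LinearMap.congr_fun₂ this f g
  ext x y
  simp [average_single, G.dist_comm (u := x), hG.sum_neighbors_dist,
    inv_mul_cancel_left₀ (Nat.cast_add_one_ne_zero (R := ℂ) q)]

lemma radialForm_aeval_treePolynomial (hG : IsHomTree G q) (hq : q ≠ 0) (o : V) :
    ∀ (n : ℕ) (ψ : ℕ → ℂ), radialForm G ψ (.single o 1)
      (aeval hG.average (treePolynomial q n) (.single o 1)) = ψ n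
  | 0, ψ => by simp [treePolynomial]
  | 1, ψ => by
    simp [treePolynomial, radialForm_average_right, radialAverage_zero]
  | n + 2, ψ => by
    have hsucc := hG.radialForm_aeval_treePolynomial hq o (n + 1) (radialAverage q ψ)
    have hn := hG.radialForm_aeval_treePolynomial hq o n ψ
    rw [← hG.radialForm_average_right, radialAverage_succ] at hsucc
    have hq' : (q : ℂ) ≠ 0 := Nat.cast_ne_zero.2 hq
    have hq1 : (q : ℂ) + 1 ≠ 0 := Nat.cast_add_one_ne_zero q
    simp only [treePolynomial, map_sub, map_mul, aeval_X, aeval_C, Module.End.mul_apply,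
      LinearMap.sub_apply, Module.algebraMap_end_apply, LinearMap.map_smul_of_tower, hsucc, hn,
      Complex.real_smul]
    push_cast
    field_simp
    ring

end IsHomTree

end AveragingOperator

section SphericalKernels

variable {V : Type} {G : SimpleGraph V} {q : ℕ}

namespace IsHomTree

lemma radialForm_sphericalFunction_nonneg_of_insert [DecidableEq V] (hG : IsHomTree G q)
    (hq : q ≠ 0) {s : ℝ} (hs : s ∈ Set.Icc (-1 : ℝ) 1) {S : Finset V}
    (hS : (G.induce (S : Set V)).Preconnected) {x c : V} (hx : x ∈ S) (hc : c ∉ S)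
    (hadj : G.Adj c x)
    (hpos : ∀ f ∈ Finsupp.supported ℂ ℂ (S : Set V), 0 ≤ radialForm G (sphericalFunction q s) f f)
    {f : V →₀ ℂ} (hf : f ∈ Finsupp.supported ℂ ℂ (insert c S : Finset V)) :
    0 ≤ radialForm G (sphericalFunction q s) f f := by
  obtain ⟨v, hv, hproj, hle⟩ := hG.exists_projection hq hs hS hx hc hadj
  have hsymm : (radialForm G (sphericalFunction q s)).IsSymm :=
    isSymm_kernelForm fun x y ↦ by simp [sphericalFunction, G.dist_comm]
  have hproj' (w) (hw : w ∈ Finsupp.supported ℂ ℂ (S : Set V)) :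
      radialForm G (sphericalFunction q s) v w =
        radialForm G (sphericalFunction q s) (.single c 1) w := by
    rw [Finsupp.supported_eq_span_single] at hw
    exact LinearMap.eqOn_span (Set.forall_mem_image.2 hproj) hw
  have herase : f.erase c ∈ Finsupp.supported ℂ ℂ (S : Set V) := by
    rw [Finsupp.mem_supported, Finsupp.support_erase]
    exact_mod_cast subset_insert_iff.1 (mod_cast (Finsupp.mem_supported ℂ f).1 hf)
  rw [← f.erase_add_single c, ← mul_one (f c), ← smul_eq_mul, ← Finsupp.smul_single]
  exact nonneg_add_smul_of_projection hsymm hpos hv hproj'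
    (by simpa [sphericalFunction, treeP] using hle) herase (f c)

lemma isPDKernel_sphericalFunction (hG : IsHomTree G q) (hq : q ≠ 0) {s : ℝ}
    (hs : s ∈ Set.Icc (-1 : ℝ) 1) :
    IsPDKernel fun x y ↦ sphericalFunction q s (G.dist x y) := by
  classical
  let P (S : Finset V) : Prop := (G.induce (S : Set V)).Preconnected ∧
    ∀ f ∈ Finsupp.supported ℂ ℂ (S : Set V), 0 ≤ radialForm G (sphericalFunction q s) f f
  have hsingleton (v : V) : P {v} := by
    refine ⟨?_, fun f hf ↦ ?_⟩
    · rw [coe_singleton]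
      exact .of_subsingleton
    · obtain ⟨a, rfl⟩ := Finsupp.support_subset_singleton'.1
        (mod_cast (Finsupp.mem_supported ℂ f).1 hf : f.support ⊆ {v})
      simpa [sphericalFunction, treeP, mul_comm] using star_mul_self_nonneg a
  have hinsert ⦃S x c⦄ (hS : P S) (hx : x ∈ S) (hc : c ∉ S) (hadj : G.Adj c x) :
      P (insert c S) := by
    refine ⟨?_, fun f hf ↦
      hG.radialForm_sphericalFunction_nonneg_of_insert hq hs hS.1 hx hc hadj hS.2 hf⟩
    rw [coe_insert, Set.insert_eq]
    exact (SimpleGraph.connected_induce_union (s := {c}) .of_subsingleton hS.1 rfl hx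
      hadj).preconnected
  refine isPDKernel_iff_isNonneg.2 ⟨fun f ↦ ?_⟩
  obtain ⟨S, hsub, -, hS⟩ := exists_finset_superset_of_insert hG.1 hsingleton hinsert f.support
  exact hS f ((Finsupp.mem_supported ℂ f).2 (mod_cast hsub))

end IsHomTree

lemma continuous_sphericalFunction (q n : ℕ) : Continuous fun s ↦ sphericalFunction q s n := by
  simp only [sphericalFunction, ← eval_treePolynomial]
  exact Complex.continuous_ofReal.comp (treePolynomial q n).continuous

end SphericalKernels

lemma isPDKernel_integral {X Ω : Type*} [MeasurableSpace Ω] {μ : Measure Ω}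
    {ψ : Ω → X → X → ℂ} (hint : ∀ x y, Integrable (fun ω ↦ ψ ω x y) μ)
    (hψ : ∀ ω, IsPDKernel (ψ ω)) : IsPDKernel fun x y ↦ ∫ ω, ψ ω x y ∂μ := by
  intro n x z
  have hterm (i j) :
      Integrable (fun ω ↦ ψ ω (x i) (x j) * (starRingEnd ℂ) (z i) * z j) μ :=
    ((hint _ _).mul_const _).mul_const _
  calc 0 ≤ ∫ ω, ∑ i, ∑ j, ψ ω (x i) (x j) * (starRingEnd ℂ) (z i) * z j ∂μ :=
      integral_nonneg fun ω ↦ hψ ω n x z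
    _ = ∑ i, ∑ j, (∫ ω, ψ ω (x i) (x j) ∂μ) * (starRingEnd ℂ) (z i) * z j := by
      rw [integral_finsetSum _ fun i _ ↦ integrable_finsetSum _ fun j _ ↦ hterm i j]
      simp only [integral_finsetSum _ fun j _ ↦ hterm _ j, integral_mul_const]

section Necessity

namespace IsHomTree

variable {V : Type} {G : SimpleGraph V} {q : ℕ}

lemma bddAbove_range_seminorm_average_pow (hG : IsHomTree G q) (p : Seminorm ℂ (V →₀ ℂ)) {M : ℝ}
    (hM : ∀ x, p (.single x 1) ≤ M) (f : V →₀ ℂ) :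
    BddAbove (Set.range fun n ↦ p ((hG.average ^ n) f)) := by
  have hsingle (n : ℕ) (x : V) : p ((hG.average ^ n) (.single x 1)) ≤ M := by
    induction n generalizing x with
    | zero => exact hM x
    | succ n ih =>
      have hnorm : ‖(q + 1 : ℂ)⁻¹‖ = (q + 1 : ℝ)⁻¹ := by
        rw [norm_inv]
        exact_mod_cast congrArg _ (Complex.norm_natCast (q + 1))
      rw [pow_succ, Module.End.mul_apply, average_single, map_smul, map_sum, map_smul_eq_mul,
        hnorm, inv_mul_le_iff₀ (by positivity)]
      calc p (∑ u ∈ hG.neighbors x, (hG.average ^ n) (.single u 1))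
          ≤ ∑ u ∈ hG.neighbors x, p ((hG.average ^ n) (.single u 1)) :=
            le_sum_of_subadditive p (map_zero p).le (map_add_le_add p) _ _
        _ ≤ #(hG.neighbors x) • M := sum_le_card_nsmul _ _ _ fun u _ ↦ ih u
        _ = (q + 1) * M := by simp [hG.card_neighbors]
  suffices ∃ C, ∀ n, p ((hG.average ^ n) f) ≤ C from
    this.imp fun C hC ↦ Set.forall_mem_range.2 hC
  induction f using Finsupp.induction_linear with
  | zero => exact ⟨0, fun n ↦ by simp⟩
  | add f g hf hg =>
    obtain ⟨C, hC⟩ := hf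
    obtain ⟨D, hD⟩ := hg
    exact ⟨C + D, fun n ↦ by
      rw [map_add]
      exact (map_add_le_add p _ _).trans (add_le_add (hC n) (hD n))⟩
  | single x a =>
    refine ⟨‖a‖ * M, fun n ↦ ?_⟩
    rw [← mul_one a, ← smul_eq_mul, ← Finsupp.smul_single, map_smul, map_smul_eq_mul, smul_eq_mul,
      mul_one]
    exact mul_le_mul_of_nonneg_left (hsingle n x) (norm_nonneg a)

lemma exists_measure_of_isPDKernel (hG : IsHomTree G q) (hq : q ≠ 0) {φ : ℕ → ℂ}
    (hφ : IsPDKernel fun x y ↦ φ (G.dist x y)) :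
    ∃ μ : Measure (Set.Icc (-1 : ℝ) 1), IsFiniteMeasure μ ∧
      ∀ n, φ n = ∫ s, ((treeP q n (s : ℝ) : ℝ) : ℂ) ∂μ := by
  obtain ⟨o⟩ := hG.1.nonempty
  let core := formCore (isPDKernel_iff_isNonneg.1 hφ)
  let : SeminormedAddCommGroup (V →₀ ℂ) :=
    InnerProductSpace.Core.toSeminormedAddCommGroup (c := core)
  let : InnerProductSpace ℂ (V →₀ ℂ) := InnerProductSpace.ofCore core
  have hinner (f g : V →₀ ℂ) : ⟪f, g⟫_ℂ = radialForm G φ f g := rfl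
  have hsymm : hG.average.IsSymmetric := fun f g ↦ by
    rw [hinner, hinner, radialForm_average_left, radialForm_average_right]
  have hnorm (x : V) : ‖(.single x 1 : V →₀ ℂ)‖ ≤ √(φ 0).re := by
    rw [norm_eq_sqrt_re_inner (𝕜 := ℂ), hinner]
    simp
  obtain ⟨μ, hμ, hint⟩ := exists_finiteMeasure_inner_aeval_of_isSymmetric hsymm
    (hG.bddAbove_range_seminorm_average_pow (normSeminorm ℂ _) hnorm) (.single o 1)
  refine ⟨μ, hμ, fun n ↦ ?_⟩
  rw [← hG.radialForm_aeval_treePolynomial hq o n φ, ← hinner, hint]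
  simp only [eval_treePolynomial]

end IsHomTree

end Necessity

section WordTree

variable {q : ℕ}

/-- Words in `q + 1` letters without equal consecutive letters, that is, the normal forms of the
elements of the free product of `q + 1` copies of `ℤ/2`. -/
abbrev ReducedWord (q : ℕ) : Type := {l : List (Fin (q + 1)) // l.IsChain (· ≠ ·)}

/-- The Cayley graph of the free product of `q + 1` copies of `ℤ/2`, which is a
`(q + 1)`-homogeneous tree. -/
def wordTree (q : ℕ) : SimpleGraph (ReducedWord q) where
  Adj l l' := ∃ a, l'.1 = a :: l.1 ∨ l.1 = a :: l'.1
  symm := ⟨fun _ _ ⟨a, h⟩ ↦ ⟨a, h.symm⟩⟩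
  loopless := ⟨fun l ⟨a, h⟩ ↦ List.cons_ne_self a l.1 (h.elim id id).symm⟩

/-- Multiplication of a reduced word by a generator, on the left. -/
def wordStep (l : ReducedWord q) (a : Fin (q + 1)) : ReducedWord q :=
  if h : l.1.head? = some a then ⟨l.1.tail, l.2.tail⟩
  else ⟨a :: l.1, List.isChain_cons.2 ⟨fun _ hy hay ↦ h (hay ▸ hy), l.2⟩⟩

lemma wordStep_eq_iff {l l' : ReducedWord q} {a : Fin (q + 1)} :
    wordStep l a = l' ↔ l'.1 = a :: l.1 ∨ l.1 = a :: l'.1 := by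
  obtain ⟨l, hl⟩ := l
  obtain ⟨l', hl'⟩ := l'
  rcases l with _ | ⟨b, l⟩ <;> grind [wordStep]

lemma wordStep_injective (l : ReducedWord q) : Function.Injective (wordStep l) := by
  intro a b hab
  have ha := wordStep_eq_iff.1 hab
  have hb := wordStep_eq_iff.1 (rfl : wordStep l b = _)
  grind [List.length_cons]

lemma neighborSet_wordTree (l : ReducedWord q) :
    (wordTree q).neighborSet l = Set.range (wordStep l) :=
  Set.ext fun _ ↦ exists_congr fun _ ↦ wordStep_eq_iff.symm

lemma wordTree_reachable_nil : ∀ (l : List (Fin (q + 1))) (hl : l.IsChain (· ≠ ·)),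
    (wordTree q).Reachable ⟨l, hl⟩ ⟨[], List.isChain_nil⟩
  | [], _ => .rfl
  | a :: l, hl =>
    have hadj : (wordTree q).Adj ⟨a :: l, hl⟩ ⟨l, hl.tail⟩ := ⟨a, .inr rfl⟩
    hadj.reachable.trans (wordTree_reachable_nil l hl.tail)

lemma wordTree_connected (q : ℕ) : (wordTree q).Connected where
  preconnected l l' :=
    (wordTree_reachable_nil l.1 l.2).trans (wordTree_reachable_nil l'.1 l'.2).symm
  nonempty := ⟨[], List.isChain_nil⟩

lemma suffix_of_wordTree_adj {a : Fin (q + 1)} {v w x y : ReducedWord q} (hw : w.1 = a :: v.1)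
    (hxy : (wordTree q).Adj x y) (hne : s(x, y) ≠ s(w, v)) (hx : w.1 <:+ x.1) : w.1 <:+ y.1 := by
  obtain ⟨b, hb | hb⟩ := hxy
  · exact hb ▸ hx.trans (List.suffix_cons b x.1)
  · rw [hb, List.suffix_cons_iff] at hx
    refine hx.resolve_left fun hwx ↦ hne ?_
    rw [Subtype.ext (hwx.trans hb.symm), Subtype.ext (List.cons.inj (hw.symm.trans hwx)).2]

lemma wordTree_isBridge {a : Fin (q + 1)} {v w : ReducedWord q} (hw : w.1 = a :: v.1) :
    (wordTree q).IsBridge s(w, v) := by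
  rw [SimpleGraph.isBridge_iff]
  rintro ⟨p⟩
  have hsuffix {x y} (p : (wordTree q \ SimpleGraph.fromEdgeSet {s(w, v)}).Walk x y)
      (hx : w.1 <:+ x.1) : w.1 <:+ y.1 := by
    induction p with
    | nil => exact hx
    | cons hadj _ ih =>
      refine ih (suffix_of_wordTree_adj hw hadj.1 (fun h ↦ hadj.2 ?_) hx)
      exact (SimpleGraph.fromEdgeSet_adj _).2 ⟨h, hadj.1.ne⟩
  have := (hsuffix p List.suffix_rfl).length_le
  simp [hw] at this

lemma wordTree_isAcyclic (q : ℕ) : (wordTree q).IsAcyclic := by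
  rw [SimpleGraph.isAcyclic_iff_forall_adj_isBridge]
  rintro v w ⟨a, h | h⟩
  · exact Sym2.eq_swap ▸ wordTree_isBridge h
  · exact wordTree_isBridge h

lemma wordTree_isHomTree (q : ℕ) : IsHomTree (wordTree q) q := by
  refine ⟨wordTree_connected q, wordTree_isAcyclic q, fun l ↦ ?_⟩
  rw [neighborSet_wordTree, ← Set.image_univ,
    Set.ncard_image_of_injective _ (wordStep_injective l), Set.ncard_univ, Nat.card_fin]

end WordTree

theorem stmt_0_general {q : ℕ} (hq : q ≠ 0) {V : Type} {G : SimpleGraph V} (hG : IsHomTree G q)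
    (φ : ℕ → ℂ) :
    IsPDKernel (fun x y ↦ φ (G.dist x y)) ↔
      ∃ μ : Measure (Set.Icc (-1 : ℝ) 1), IsFiniteMeasure μ ∧
        ∀ n, φ n = ∫ s, ((treeP q n (s : ℝ) : ℝ) : ℂ) ∂μ := by
  refine ⟨hG.exists_measure_of_isPDKernel hq, ?_⟩
  rintro ⟨μ, hμ, hφ⟩
  simp only [hφ]
  refine isPDKernel_integral (fun x y ↦ ?_) fun s ↦ hG.isPDKernel_sphericalFunction hq s.2
  exact ((continuous_sphericalFunction q _).comp
    continuous_subtype_val).integrable_of_hasCompactSupport (.of_compactSpace _)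

theorem stmt_0 (q : ℕ) (hq : 2 ≤ q) (φ : ℕ → ℂ) :
    (∀ (V : Type) (G : SimpleGraph V), IsHomTree G q →
        IsPDKernel (fun x y => φ (G.dist x y)))
      ↔ ∃ μ : Measure (Set.Icc (-1 : ℝ) 1), IsFiniteMeasure μ ∧
          ∀ n : ℕ, φ n = ∫ s, ((treeP q n (s : ℝ) : ℝ) : ℂ) ∂μ :=
  have hq' : q ≠ 0 := by omega
  ⟨fun hφ ↦ (stmt_0_general hq' (wordTree_isHomTree q) φ).1 (hφ _ _ (wordTree_isHomTree q)),
    fun hφ _ _ hG ↦ (stmt_0_general hq' hG φ).2 hφ⟩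
end

section
/- Let 2 ≤ q < ∞. Then R₊(T_q × T_q) is strictly contained in R₊(T_q): every φ : ℕ → ℂ that belongs to R₊(T_q × T_q) also belongs to R₊(T_q), and the function φ₀ : ℕ → ℂ given by φ₀(n) = (−1/q)^{n/2} for n even and φ₀(n) = 0 for n odd belongs to R₊(T_q) but does not belong to R₊(T_q × T_q). -/
/-!
The function `φ₀` satisfies `φ₀(n + 2) = -φ₀(n) / q` and `φ₀(1) = 0`. If `v` has degree `k` in a
tree, all but one of its neighbours lie farther from a given point `y ≠ v` than `v` itself, so
this recursion gives `∑_{u ∼ v} φ₀(d(u, y)) = (k - (q + 1)) φ₀(d(v, y) + 1)` for every `y`. When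
`v` is the neighbour of a leaf `x`, the left-hand side contains the `x`-row of the matrix `φ₀(d)`,
and for `y ≠ x` the right-hand side is a multiple of it. Hence this row is a combination of the
other ones up to an error on the diagonal, which is nonnegative as long as `k ≤ q + 1`. Removing
leaves one at a time proves positivity on every finite tree with degrees at most `q + 1`, and
finite subsets of an infinite tree lie in finite subtrees, which are isometrically embedded.

In a product, let `v` have the `q + 1` neighbours `u` and let `a ∼ b`. The indicator of the points
`(u, a)` is isotropic for the kernel, because `1 + q (-1 / q) = 0`, but it pairs to
`-(q + 1) / q ≠ 0` with the point `(v, b)`, which lies at distance `2` from all of them.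
-/

open MeasureTheory Filter Finset
open scoped ComplexOrder

/-- The function `φ₀(n) = (-1/q)^(n/2)` for even `n`, `0` for odd `n`. -/
noncomputable def phi0 (q : ℕ) : ℕ → ℂ := fun n =>
  if Even n then (-(1/(q:ℂ)))^(n/2) else 0

section Trees

variable {V : Type*} {G : SimpleGraph V}

theorem dist_eq_length_of_isAcyclic (hG : G.IsAcyclic) {u v : V} {p : G.Walk u v} (hp : p.IsPath) :
    G.dist u v = p.length := by
  obtain ⟨r, hr, hr_length⟩ := p.reachable.exists_path_of_dist
  have := hG.subsingleton_path u v
  obtain rfl : r = p := congrArg Subtype.val (Subsingleton.elim (⟨r, hr⟩ : G.Path u v) ⟨p, hp⟩)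
  exact hr_length.symm

theorem dist_induce_of_isAcyclic (hG : G.IsAcyclic) {s : Set V} (hs : (G.induce s).Preconnected)
    (x y : s) :
    (G.induce s).dist x y = G.dist (x : V) y := by
  obtain ⟨p, hp, hp_length⟩ := (hs x y).exists_path_of_dist
  let φ : G.induce s ↪g G := SimpleGraph.Embedding.induce s
  have hφp : (p.map φ.toHom).IsPath := hp.map φ.injective
  rw [← hp_length, ← SimpleGraph.Walk.length_map φ.toHom p]
  exact (dist_eq_length_of_isAcyclic hG hφp).symm

theorem dist_eq_dist_add_one_of_forall_adj (hG : G.Connected) {x v y : V}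
    (hxv : G.Adj x v) (hx : ∀ u, G.Adj x u → u = v) (hxy : x ≠ y) :
    G.dist x y = G.dist v y + 1 := by
  obtain ⟨p, hp⟩ := hG.exists_walk_length_eq_dist x y
  cases p with
  | nil => exact absurd rfl hxy
  | @cons _ u _ hxu p =>
    obtain rfl := hx u hxu
    have hle : G.dist u y ≤ p.length := G.dist_le p
    have htriangle := hG.dist_triangle (u := x) (v := u) (w := y)
    rw [SimpleGraph.dist_eq_one_iff_adj.2 hxv] at htriangle
    rw [SimpleGraph.Walk.length_cons] at hp
    omega

theorem dist_eq_two_of_adj_of_adj (hG : G.CliqueFree 3) {u v w : V} (hvu : G.Adj v u)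
    (hvw : G.Adj v w) (huw : u ≠ w) : G.dist u w = 2 := by
  classical
  have huw_not_adj : ¬ G.Adj u w := fun h =>
    hG {v, u, w} (SimpleGraph.is3Clique_triple_iff.2 ⟨hvu, hvw, h⟩)
  let p : G.Walk u w := .cons hvu.symm (.cons hvw .nil)
  have hlt := p.reachable.one_lt_dist_of_ne_of_not_adj huw huw_not_adj
  have hle : G.dist u w ≤ 2 := G.dist_le p
  omega

theorem existsUnique_adj_dist_eq_dist_add_one (hG : G.IsTree) {v y : V} (hvy : v ≠ y) :
    ∃! u, G.Adj v u ∧ G.dist v y = G.dist u y + 1 := by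
  obtain ⟨p, hp, hp_length⟩ := hG.connected.exists_path_of_dist v y
  have hp_snd : ∀ u, G.Adj v u → G.dist v y = G.dist u y + 1 → u = p.snd := by
    intro u hvu hu
    obtain ⟨r, hr⟩ := hG.connected.exists_walk_length_eq_dist u y
    have hcons : (r.cons hvu).IsPath :=
      SimpleGraph.Walk.isPath_of_length_eq_dist _ (by rw [SimpleGraph.Walk.length_cons, hr, hu])
    rw [← (hG.existsUnique_path v y).unique hcons hp, SimpleGraph.Walk.snd_cons]
  cases p with
  | nil => exact absurd rfl hvy
  | @cons _ u _ hvu p =>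
    refine ⟨u, ⟨hvu, ?_⟩, fun w hw => by simpa using hp_snd w hw.1 hw.2⟩
    rw [← hp_length, SimpleGraph.Walk.length_cons,
      dist_eq_length_of_isAcyclic hG.isAcyclic hp.of_cons]

theorem sum_neighborFinset_dist {M : Type*} [AddCommMonoid M] (hG : G.IsTree) {v y : V}
    [Fintype (G.neighborSet v)] (hvy : v ≠ y) (f : ℕ → M) :
    ∑ u ∈ G.neighborFinset v, f (G.dist u y) =
      f (G.dist v y - 1) + (G.degree v - 1) • f (G.dist v y + 1) := by
  classical
  obtain ⟨u, ⟨hvu, hu⟩, hu_unique⟩ := existsUnique_adj_dist_eq_dist_add_one hG hvy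
  have hu_mem : u ∈ G.neighborFinset v := (G.mem_neighborFinset v u).2 hvu
  have hother : ∀ w ∈ (G.neighborFinset v).erase u, f (G.dist w y) = f (G.dist v y + 1) := by
    intro w hw
    rw [Finset.mem_erase, SimpleGraph.mem_neighborFinset] at hw
    rcases hG.dist_eq_dist_add_one_of_adj y hw.2 with h | h
    · rw [G.dist_comm, G.dist_comm (u := y) (v := w)] at h
      exact absurd (hu_unique w ⟨hw.2, h⟩) hw.1
    · rw [G.dist_comm (u := w), h, G.dist_comm]
  rw [← Finset.add_sum_erase _ _ hu_mem, Finset.sum_congr rfl hother, Finset.sum_const,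
    Finset.card_erase_of_mem hu_mem, SimpleGraph.card_neighborFinset_eq_degree, hu,
    Nat.add_sub_cancel]

theorem encard_neighborSet_induce_le (s : Set V) (v : s) :
    ((G.induce s).neighborSet v).encard ≤ (G.neighborSet (v : V)).encard :=
  Set.encard_le_encard_of_injOn (f := Subtype.val) (fun _ hu => hu) Subtype.val_injective.injOn

theorem isAcyclic_of_subsingleton_lower_neighbors {α : Type*} [LinearOrder α] (r : V → α)
    (h : ∀ v, {u | G.Adj v u ∧ r u ≤ r v}.Subsingleton) : G.IsAcyclic := by
  -- Where `r` is maximal along a cycle, both neighbours on the cycle are lower neighbours.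
  classical
  intro v c hc
  obtain ⟨u, hu, hu_max⟩ := c.support.toFinset.exists_max_image r ⟨v, by simp⟩
  simp only [List.mem_toFinset] at hu hu_max
  let d := c.rotate u hu
  have hd : d.IsCycle := hc.rotate hu
  have hd_max : ∀ w ∈ d.support, r w ≤ r u := fun w hw =>
    hu_max w ((c.mem_support_rotate_iff u hu).1 hw)
  have hsnd : G.Adj u d.snd := d.adj_snd hd.not_nil
  have hpenultimate : G.Adj u d.penultimate := (d.adj_penultimate hd.not_nil).symm
  exact hd.snd_ne_penultimate <| h u ⟨hsnd, hd_max _ (d.getVert_mem_support _)⟩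
    ⟨hpenultimate, hd_max _ (d.getVert_mem_support _)⟩

end Trees

/-- The parent map of `edgeRootedTree`; the two roots are parents of each other. -/
def edgeRootedParent {α : Type*} : Bool × List α → Bool × List α
  | (b, []) => (!b, [])
  | (b, _ :: l) => (b, l)

/-- Two rooted trees in which the children of every vertex are labelled by `α`, joined by an edge
between their roots. The vertex `(b, l)` lies in the tree with label `b`, and `l` lists the labels
on the way up from the vertex to the root. -/
def edgeRootedTree (α : Type*) : SimpleGraph (Bool × List α) :=
  .fromRel fun v w => edgeRootedParent v = w

section EdgeRootedTree

variable {α : Type*}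

theorem edgeRootedParent_ne (v : Bool × List α) : edgeRootedParent v ≠ v := by
  rcases v with ⟨b, _ | ⟨i, l⟩⟩ <;> simp [edgeRootedParent]

theorem edgeRootedTree_adj {v w : Bool × List α} :
    (edgeRootedTree α).Adj v w ↔ edgeRootedParent v = w ∨ edgeRootedParent w = v := by
  rw [edgeRootedTree, SimpleGraph.fromRel_adj, and_iff_right_iff_imp]
  rintro (h | h) rfl <;> exact edgeRootedParent_ne _ h

theorem neighborSet_edgeRootedTree (b : Bool) (l : List α) :
    (edgeRootedTree α).neighborSet (b, l) =
      insert (edgeRootedParent (b, l)) (Set.range fun i => (b, i :: l)) := by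
  ext ⟨c, m⟩
  rw [SimpleGraph.mem_neighborSet, edgeRootedTree_adj]
  cases l <;> cases m <;> cases b <;> cases c <;> simp [edgeRootedParent] <;> grind

theorem edgeRootedTree_connected : (edgeRootedTree α).Connected := by
  have hroot : ∀ b, (edgeRootedTree α).Reachable (true, []) (b, [])
    | true => .refl _
    | false => (edgeRootedTree_adj.2 (.inl rfl)).reachable
  have hreach : ∀ b l, (edgeRootedTree α).Reachable (true, []) (b, l) := by
    intro b l
    induction l with
    | nil => exact hroot b
    | cons i l ih =>
      have hadj : (edgeRootedTree α).Adj (b, l) (b, i :: l) := edgeRootedTree_adj.2 (.inr rfl)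
      exact ih.trans hadj.reachable
  exact ⟨fun v w => (hreach v.1 v.2).symm.trans (hreach w.1 w.2)⟩

theorem edgeRootedTree_isAcyclic : (edgeRootedTree α).IsAcyclic := by
  refine isAcyclic_of_subsingleton_lower_neighbors (fun v => v.2.length) fun v => ?_
  have hparent : ∀ u, (edgeRootedTree α).Adj v u → u.2.length ≤ v.2.length →
      u = edgeRootedParent v := by
    intro u hvu hle
    rcases edgeRootedTree_adj.1 hvu with h | rfl
    · exact h.symm
    · rcases u with ⟨b, _ | ⟨i, l⟩⟩ <;> simp [edgeRootedParent] at hle ⊢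
  intro u hu w hw
  rw [hparent u hu.1 hu.2, hparent w hw.1 hw.2]

end EdgeRootedTree

theorem edgeRootedTree_isHomTree (q : ℕ) : IsHomTree (edgeRootedTree (Fin q)) q := by
  refine ⟨edgeRootedTree_connected, edgeRootedTree_isAcyclic, fun ⟨b, l⟩ => ?_⟩
  have hinj : Function.Injective fun i : Fin q => (b, i :: l) := fun i j h => by simpa using h
  have hnotMem : edgeRootedParent (b, l) ∉ Set.range fun i : Fin q => (b, i :: l) := by
    rintro ⟨i, hi⟩
    have hlength : (i :: l).length = (edgeRootedParent (b, l)).2.length :=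
      congrArg (fun v => v.2.length) hi
    cases l with
    | nil => simp [edgeRootedParent] at hlength
    | cons j l => simp only [edgeRootedParent, List.length_cons] at hlength; omega
  rw [neighborSet_edgeRootedTree, Set.ncard_insert_of_notMem hnotMem,
    Set.ncard_range_of_injective hinj, Nat.card_fin]

section Phi0

variable {q : ℕ}

theorem phi0_zero : phi0 q 0 = 1 := by simp [phi0]

theorem phi0_one : phi0 q 1 = 0 := by simp [phi0]

theorem phi0_add_two (n : ℕ) : phi0 q (n + 2) = -(1 / (q : ℂ)) * phi0 q n := by
  unfold phi0
  by_cases hn : Even n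
  · rw [if_pos hn, if_pos (hn.add even_two), Nat.add_div_right _ two_pos, pow_succ']
  · rw [if_neg hn, if_neg (by simpa [Nat.even_add] using hn), mul_zero]

theorem phi0_two : phi0 q 2 = -(1 / (q : ℂ)) := by
  rw [phi0_add_two 0, phi0_zero, mul_one]

theorem star_phi0 (n : ℕ) : star (phi0 q n) = phi0 q n := by
  by_cases hn : Even n <;> simp [phi0, hn]

theorem sum_neighborFinset_phi0_dist (hq : q ≠ 0) {V : Type*} {G : SimpleGraph V} (hG : G.IsTree)
    (v y : V) [Fintype (G.neighborSet v)] :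
    ∑ u ∈ G.neighborFinset v, phi0 q (G.dist u y) =
      ((G.degree v : ℂ) - (q + 1)) * phi0 q (G.dist v y + 1) := by
  have hq' : (q : ℂ) ≠ 0 := Nat.cast_ne_zero.2 hq
  by_cases hvy : v = y
  · subst hvy
    rw [SimpleGraph.dist_self, zero_add, phi0_one, mul_zero]
    refine Finset.sum_eq_zero fun u hu => ?_
    rw [SimpleGraph.dist_eq_one_iff_adj.2 ((G.mem_neighborFinset v u).1 hu).symm, phi0_one]
  · have hdist : 1 ≤ G.dist v y := hG.connected.pos_dist_of_ne hvy
    obtain ⟨u, ⟨hvu, -⟩, -⟩ := existsUnique_adj_dist_eq_dist_add_one hG hvy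
    have hdegree : 1 ≤ G.degree v := (G.degree_pos_iff_exists_adj v).2 ⟨u, hvu⟩
    obtain ⟨n, hn⟩ := Nat.exists_eq_add_of_le' hdist
    rw [sum_neighborFinset_dist hG hvy, hn, Nat.add_sub_cancel, nsmul_eq_mul, Nat.cast_sub hdegree,
      Nat.cast_one, phi0_add_two]
    field_simp
    ring

end Phi0

section PositiveDefinite

open Matrix

theorem posSemidef_of_row_eq_sum {n 𝕜 : Type*} [Fintype n] [RCLike 𝕜] {M : Matrix n n 𝕜}
    (hM : M.IsHermitian) (x : n)
    (hsub : (M.submatrix ((↑) : {y // y ≠ x} → n) (↑)).PosSemidef) {b : n → 𝕜} (hbx : b x = 0)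
    (hrow : ∀ y ≠ x, ∑ u, b u * M u y = M x y) (hdiag : ∑ u, b u * M u x ≤ M x x) :
    M.PosSemidef := by
  -- `M = B N Bᴴ + diagonal a`, where `N` is `M` without the row and column `x`.
  classical
  let B : Matrix n {y // y ≠ x} 𝕜 := .of fun i u => if i = x then b u else if i = u then 1 else 0
  let a : n → 𝕜 := Pi.single x (M x x - ∑ u, b u * M u x)
  have hBx : ∀ y, ∑ u, B x u * M u y = ∑ u, b u * M u y := fun y => by
    simp [B, Fintype.sum_eq_add_sum_subtype_ne _ x, hbx]
  have hBi : ∀ i ≠ x, ∀ y, ∑ u, B i u * M u y = M i y := fun i hi y => by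
    rw [Fintype.sum_eq_single ⟨i, hi⟩ fun u hu => by
      have hiu : i ≠ u := fun h => hu (Subtype.ext h.symm)
      simp [B, hi, hiu]]
    simp [B, hi]
  have hleft : B * M.submatrix (↑) (↑) = M.submatrix id ((↑) : {y // y ≠ x} → n) := by
    ext i y
    rcases eq_or_ne i x with rfl | hi
    · exact (hBx y).trans (hrow y y.2)
    · exact hBi i hi y
  have hright : M.submatrix id ((↑) : {y // y ≠ x} → n) * Bᴴ + diagonal a = M := by
    have hstar : ∀ i j, (M.submatrix id ((↑) : {y // y ≠ x} → n) * Bᴴ) i j =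
        star (∑ u, B j u * M u i) := fun i j => by
      simp [Matrix.mul_apply, hM.apply, mul_comm]
    ext i j
    rw [Matrix.add_apply, hstar]
    rcases eq_or_ne j x with rfl | hj
    · rw [hBx]
      rcases eq_or_ne i j with rfl | hi
      · have hself := (IsSelfAdjoint.of_nonneg (sub_nonneg.2 hdiag)).star_eq
        rw [star_sub, hM.apply] at hself
        have ha : a i = M i i - ∑ u, b u * M u i := Pi.single_eq_same _ _
        rw [diagonal_apply_eq, ha, ← hself, add_sub_cancel]
      · rw [hrow i hi, hM.apply, diagonal_apply_ne _ hi, add_zero]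
    · have hdiagonal : diagonal a i j = 0 := by
        simp +contextual [diagonal_apply, a, hj]
      rw [hBi j hj, hM.apply, hdiagonal, add_zero]
  rw [← hright, ← hleft]
  exact (hsub.mul_mul_conjTranspose_same B).add
    (.diagonal (Pi.single_nonneg.2 (sub_nonneg.2 hdiag)))

theorem isPDKernel_of_posSemidef {X : Type*} {ψ : X → X → ℂ}
    (h : ∀ s : Finset X, ∃ t : Set X, ↑s ⊆ t ∧ (Matrix.of fun x y : t => ψ x y).PosSemidef) :
    IsPDKernel ψ := by
  classical
  intro n x z
  obtain ⟨t, hst, ht⟩ := h (univ.image x)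
  let x' : Fin n → t := fun i => ⟨x i, hst (mem_image_of_mem x (mem_univ i))⟩
  refine ((ht.submatrix x').dotProduct_mulVec_nonneg z).trans_eq ?_
  simp only [dotProduct, mulVec, Finset.mul_sum]
  refine sum_congr rfl fun i _ => sum_congr rfl fun j _ => ?_
  simp only [submatrix_apply, of_apply, x', Pi.star_apply, starRingEnd_apply]
  ring

theorem IsPDKernel.sum_nonneg {X ι : Type*} [Fintype ι] {ψ : X → X → ℂ} (hψ : IsPDKernel ψ)
    (x : ι → X) (z : ι → ℂ) :
    0 ≤ ∑ i, ∑ j, ψ (x i) (x j) * (starRingEnd ℂ) (z i) * z j := by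
  let e := (Fintype.equivFin ι).symm
  refine (hψ _ (x ∘ e) (z ∘ e)).trans_eq ?_
  simp only [← e.sum_comp, Function.comp_apply]

end PositiveDefinite

section TreeKernel

variable {q : ℕ} {V : Type*} {G : SimpleGraph V}

theorem isHermitian_phi0_dist : (Matrix.of fun x y => phi0 q (G.dist x y)).IsHermitian :=
  Matrix.IsHermitian.ext fun x y => by rw [Matrix.of_apply, star_phi0, G.dist_comm, Matrix.of_apply]

theorem sum_neighborFinset_erase_phi0_dist (hq : q ≠ 0) (hG : G.IsTree) {x v : V} [DecidableEq V]
    [Fintype (G.neighborSet v)] (hxv : G.Adj x v) {m : ℕ} (hm : G.degree v + m = q + 1) (y : V) :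
    ∑ u ∈ (G.neighborFinset v).erase x, phi0 q (G.dist u y) =
      -m * phi0 q (G.dist v y + 1) - phi0 q (G.dist x y) := by
  have hm' : (G.degree v : ℂ) - (q + 1) = -m := by
    rw [← Nat.cast_add_one, ← hm, Nat.cast_add]
    ring
  rw [Finset.sum_erase_eq_sub ((G.mem_neighborFinset v x).2 hxv.symm),
    sum_neighborFinset_phi0_dist hq hG, hm']

theorem posSemidef_phi0_dist_of_leaf [Finite V] (hq : q ≠ 0) (hG : G.IsTree) {x v : V}
    (hxv : G.Adj x v) (hx : ∀ u, G.Adj x u → u = v) (hdegree : (G.neighborSet v).encard ≤ q + 1)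
    (hsub : ((Matrix.of fun y z => phi0 q (G.dist y z)).submatrix
      ((↑) : {y // y ≠ x} → V) (↑)).PosSemidef) :
    (Matrix.of fun y z => phi0 q (G.dist y z)).PosSemidef := by
  classical
  have := Fintype.ofFinite V
  have hq' : (q : ℂ) ≠ 0 := Nat.cast_ne_zero.2 hq
  obtain ⟨m, hm⟩ : ∃ m, G.degree v + m = q + 1 := by
    rw [Set.encard_eq_coe_toFinset_card, ← SimpleGraph.neighborFinset_def] at hdegree
    exact Nat.exists_eq_add_of_le (by exact_mod_cast hdegree) |>.imp fun _ => Eq.symm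
  have hm' : (m : ℂ) + 1 ≠ 0 := Nat.cast_add_one_ne_zero m
  let b : V → ℂ := fun u => if u ∈ (G.neighborFinset v).erase x then -1 / (m + 1) else 0
  have hsum : ∀ y, ∑ u, b u * phi0 q (G.dist u y) =
      (m * phi0 q (G.dist v y + 1) + phi0 q (G.dist x y)) / (m + 1) := fun y => by
    simp only [b, ite_mul, zero_mul, Finset.sum_ite_mem, Finset.univ_inter, ← Finset.mul_sum,
      sum_neighborFinset_erase_phi0_dist hq hG hxv hm]
    ring
  refine posSemidef_of_row_eq_sum isHermitian_phi0_dist x hsub (b := b) (by simp [b])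
    (fun y hyx => ?_) ?_
  · simp only [Matrix.of_apply, hsum,
      dist_eq_dist_add_one_of_forall_adj hG.connected hxv hx hyx.symm]
    field_simp
  · have hresidual : (1 : ℂ) - (m * -(1 / (q : ℂ)) + 1) / (m + 1) =
        ((m * (q + 1) / (q * (m + 1)) : ℝ) : ℂ) := by
      push_cast
      field_simp
      ring
    simp only [Matrix.of_apply, hsum, SimpleGraph.dist_self, phi0_zero,
      SimpleGraph.dist_eq_one_iff_adj.2 hxv.symm, one_add_one_eq_two, phi0_two]
    rw [← sub_nonneg, hresidual, Complex.zero_le_real]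
    positivity

theorem posSemidef_phi0_dist [Finite V] (hq : q ≠ 0) (hG : G.IsTree)
    (hdegree : ∀ v, (G.neighborSet v).encard ≤ q + 1) :
    (Matrix.of fun x y => phi0 q (G.dist x y)).PosSemidef := by
  classical
  revert G
  induction V using Finite.induction_subsingleton_or_nontrivial with
  | hbase V =>
    intro G _ _
    convert Matrix.PosSemidef.one (n := V) (R := ℂ)
    ext x y
    rw [Matrix.of_apply, Subsingleton.elim y x, G.dist_self, phi0_zero, Matrix.one_apply_eq]
  | hstep V ih =>
    intro G hG hdegree
    have := Fintype.ofFinite V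
    obtain ⟨x, hx_degree⟩ := hG.exists_vert_degree_one_of_nontrivial
    obtain ⟨v, hxv, hx⟩ := G.degree_eq_one_iff_existsUnique_adj.1 hx_degree
    have htree : (G.induce {x}ᶜ).IsTree :=
      ⟨hG.connected.induce_compl_singleton_of_degree_eq_one hx_degree, hG.isAcyclic.induce _⟩
    have hcard : Nat.card ({x}ᶜ : Set V) < Nat.card V := Finite.card_subtype_lt fun h => h rfl
    refine posSemidef_phi0_dist_of_leaf hq hG hxv hx (hdegree v) ?_
    have hrestrict : (Matrix.of fun y z => phi0 q (G.dist y z)).submatrix (↑) (↑) =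
        Matrix.of fun y z => phi0 q ((G.induce {x}ᶜ).dist y z) := by
      ext y z
      exact congrArg (phi0 q)
        (dist_induce_of_isAcyclic hG.isAcyclic htree.connected.preconnected y z).symm
    exact hrestrict ▸ ih _ hcard htree fun u =>
      (encard_neighborSet_induce_le _ u).trans (hdegree u)

theorem isPDKernel_phi0_dist (hq : q ≠ 0) (hG : G.IsTree)
    (hdegree : ∀ v, (G.neighborSet v).encard ≤ q + 1) :
    IsPDKernel fun x y => phi0 q (G.dist x y) := by
  classical
  refine isPDKernel_of_posSemidef fun s => ?_
  obtain ⟨o⟩ := hG.connected.nonempty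
  obtain ⟨t, hst, ht⟩ :=
    G.extend_finset_to_connected hG.connected.preconnected (Finset.insert_nonempty o s)
  refine ⟨t, Finset.coe_subset.2 ((Finset.subset_insert o s).trans hst), ?_⟩
  simpa only [dist_induce_of_isAcyclic hG.isAcyclic ht.preconnected] using
    posSemidef_phi0_dist hq ⟨ht, hG.isAcyclic.induce _⟩
      fun u => (encard_neighborSet_induce_le _ u).trans (hdegree u)

end TreeKernel

theorem sum_neighborSet_phi0_dist_of_adj {q : ℕ} (hq : q ≠ 0) {V : Type*} {G : SimpleGraph V}
    (hG : G.CliqueFree 3) {v : V} [Fintype (G.neighborSet v)] (hv : G.degree v = q + 1)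
    (u : G.neighborSet v) : ∑ w : G.neighborSet v, phi0 q (G.dist u w) = 0 := by
  classical
  have hother : ∀ w ∈ univ.erase u, phi0 q (G.dist u w) = -(1 / (q : ℂ)) := fun w hw => by
    have huw : (u : V) ≠ w := Subtype.coe_injective.ne (Finset.ne_of_mem_erase hw).symm
    rw [dist_eq_two_of_adj_of_adj hG u.2 w.2 huw, phi0_two]
  have hcard : #(univ.erase u) = q := by
    rw [Finset.card_erase_of_mem (mem_univ u), card_univ, G.card_neighborSet_eq_degree, hv,
      Nat.add_sub_cancel]
  rw [← Finset.add_sum_erase _ _ (mem_univ u), Finset.sum_congr rfl hother, Finset.sum_const, hcard,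
    SimpleGraph.dist_self, phi0_zero, nsmul_eq_mul]
  field_simp
  ring

theorem not_isPDKernel_phi0_dist_add_dist {q : ℕ} (hq : q ≠ 0) {V W : Type*} {G : SimpleGraph V}
    {H : SimpleGraph W} (hG : G.CliqueFree 3) {v : V} (hv : (G.neighborSet v).ncard = q + 1)
    {a b : W} (hab : H.Adj a b) :
    ¬ IsPDKernel fun x y : V × W => phi0 q (G.dist x.1 y.1 + H.dist x.2 y.2) := by
  intro h
  have := (Set.finite_of_ncard_ne_zero (s := G.neighborSet v) (by omega)).fintype
  have hdegree : G.degree v = q + 1 := by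
    rw [← G.card_neighborSet_eq_degree, ← Nat.card_eq_fintype_card, Nat.card_coe_set_eq, hv]
  have hcross : ∀ u : G.neighborSet v, phi0 q (G.dist v u + H.dist b a) = -(1 / (q : ℂ)) := by
    intro u
    rw [SimpleGraph.dist_eq_one_iff_adj.2 u.2, SimpleGraph.dist_eq_one_iff_adj.2 hab.symm,
      one_add_one_eq_two, phi0_two]
  have hcross' : ∀ u : G.neighborSet v, phi0 q (G.dist u v + H.dist a b) = -(1 / (q : ℂ)) := by
    intro u
    rw [G.dist_comm, H.dist_comm, hcross]
  have hsum := h.sum_nonneg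
    (fun i : Option (G.neighborSet v) => i.elim (v, b) fun u => ((u : V), a)) (fun _ => 1)
  simp only [Fintype.sum_option, Option.elim, map_one, mul_one, hcross, hcross',
    SimpleGraph.dist_self, add_zero, phi0_zero, sum_neighborSet_phi0_dist_of_adj hq hG hdegree,
    sum_const, card_univ, G.card_neighborSet_eq_degree, hdegree, nsmul_eq_mul] at hsum
  have hvalue : (1 : ℂ) + (q + 1 : ℕ) * -(1 / q) + (q + 1 : ℕ) * -(1 / q) =
      ((-1 - 2 / q : ℝ) : ℂ) := by
    push_cast
    field_simp
    ring
  rw [hvalue, Complex.zero_le_real] at hsum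
  have hq' : (0 : ℝ) ≤ 2 / q := by positivity
  linarith

theorem stmt_6 (q : ℕ) (hq : 2 ≤ q) :
    (∀ φ : ℕ → ℂ,
        (∀ (V₁ V₂ : Type) (G₁ : SimpleGraph V₁) (G₂ : SimpleGraph V₂),
            IsHomTree G₁ q → IsHomTree G₂ q →
            IsPDKernel (fun x y : V₁ × V₂ =>
              φ (G₁.dist x.1 y.1 + G₂.dist x.2 y.2))) →
        (∀ (V : Type) (G : SimpleGraph V), IsHomTree G q →
            IsPDKernel (fun x y => φ (G.dist x y)))) ∧
    (∀ (V : Type) (G : SimpleGraph V), IsHomTree G q →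
        IsPDKernel (fun x y => phi0 q (G.dist x y))) ∧
    ¬(∀ (V₁ V₂ : Type) (G₁ : SimpleGraph V₁) (G₂ : SimpleGraph V₂),
        IsHomTree G₁ q → IsHomTree G₂ q →
        IsPDKernel (fun x y : V₁ × V₂ =>
          phi0 q (G₁.dist x.1 y.1 + G₂.dist x.2 y.2))) := by
  have hq0 : q ≠ 0 := by omega
  refine ⟨fun φ h V G hG n x z => ?_, fun V G hG => ?_, fun h => ?_⟩
  · obtain ⟨o⟩ := hG.1.nonempty
    simpa only [SimpleGraph.dist_self, add_zero] using
      h V V G G hG hG n (fun i => (x i, o)) z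
  · refine isPDKernel_phi0_dist hq0 ⟨hG.1, hG.2.1⟩ fun v => ?_
    have hfinite : (G.neighborSet v).Finite :=
      Set.finite_of_ncard_ne_zero (hG.2.2 v ▸ Nat.succ_ne_zero q)
    rw [← hfinite.cast_ncard_eq, hG.2.2 v, Nat.cast_add_one]
  · have hT := edgeRootedTree_isHomTree q
    have hroots : (edgeRootedTree (Fin q)).Adj (true, []) (false, []) :=
      edgeRootedTree_adj.2 (.inl rfl)
    exact not_isPDKernel_phi0_dist_add_dist hq0 (hT.2.1.cliqueFree le_rfl) (hT.2.2 (true, []))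
      hroots (h _ _ _ _ hT hT)
end
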